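/- arXiv:1701.07601 — 2 statements merged into one kernel-verified Lean document; each statement's English description precedes it below -/
import Mathlib

section
/- Let Fl ⊣ Fr be an adjunction inducing the monad T = Fr ∘ Fl on 𝒜, let (A, α) be a projective T-algebra with algebra-homomorphism section ᾱ : A ⟶ T A (ᾱ ∘ α = μ_A ∘ T ᾱ, α ∘ ᾱ = id_A), and let φ := ε_{Fl A} ∘ Fl ᾱ : Fl A ⟶ Fl A be the adjunction transpose of ᾱ. Suppose φ splits in ℬ as φ = i ∘ q with q : Fl A ⟶ B, i : B ⟶ Fl A, and q ∘ i = id_B. Then the adjunction transpose q' := Fr q ∘ η_A : A ⟶ Fr B of q is an isomorphism, with inverse α ∘ Fr i : Fr B ⟶ A. -/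
open CategoryTheory

/-- `transpose_of_splitting_is_iso` in terms of an action map `a : Fr (Fl X) ⟶ X` and a section
`s` of it, without bundling the monad of the adjunction. -/
theorem transpose_comp_inverse {A B : Type*} [Category A] [Category B]
    {Fl : A ⥤ B} {Fr : B ⥤ A} (adj : Fl ⊣ Fr) {X : A}
    (a : Fr.obj (Fl.obj X) ⟶ X) (s : X ⟶ Fr.obj (Fl.obj X))
    (has : a ≫ s = Fr.map (Fl.map s ≫ adj.counit.app (Fl.obj X)))
    (hsa : s ≫ a = 𝟙 X) {Y : B} (q : Fl.obj X ⟶ Y) (i : Y ⟶ Fl.obj X)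
    (hsplit : q ≫ i = Fl.map s ≫ adj.counit.app (Fl.obj X)) (hqi : i ≫ q = 𝟙 Y) :
    (adj.unit.app X ≫ Fr.map q) ≫ (Fr.map i ≫ a) = 𝟙 X ∧
    (Fr.map i ≫ a) ≫ (adj.unit.app X ≫ Fr.map q) = 𝟙 (Fr.obj Y) := by
  have unit_split : adj.unit.app X ≫ Fr.map q ≫ Fr.map i = s := by
    rw [← Fr.map_comp, hsplit]
    simp
  have unit_map_q : adj.unit.app X ≫ Fr.map q = s ≫ Fr.map q := by
    rw [← unit_split]
    simp only [Category.assoc, ← Fr.map_comp, hqi, Category.comp_id]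
  constructor
  · rw [Category.assoc, ← Category.assoc (Fr.map q), ← Category.assoc, unit_split, hsa]
  · rw [unit_map_q, Category.assoc, ← Category.assoc a, has, ← hsplit]
    simp only [← Fr.map_comp, Category.assoc, hqi, Category.comp_id, Fr.map_id]

/-- Let `Fl ⊣ Fr` induce the monad `T = Fr ∘ Fl`, let `(A, α)` be a projective
`T`-algebra with algebra-homomorphism section `ᾱ`, and let `φ := ε_{Fl A} ∘ Fl ᾱ` be the
transpose of `ᾱ`. If `φ` splits as `φ = i ∘ q` with `q ∘ i = id_B`, then the transpose
`q' := Fr q ∘ η_A : A ⟶ Fr B` of `q` is an isomorphism with inverse `α ∘ Fr i`. -/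
theorem transpose_of_splitting_is_iso {A B : Type*} [Category A] [Category B]
    {Fl : A ⥤ B} {Fr : B ⥤ A} (adj : Fl ⊣ Fr)
    (X : (Adjunction.toMonad adj).Algebra)
    (abar : X.A ⟶ (Adjunction.toMonad adj).obj X.A)
    (habar : X.a ≫ abar =
      (Adjunction.toMonad adj).map abar ≫ (Adjunction.toMonad adj).μ.app X.A)
    (hsec : abar ≫ X.a = 𝟙 X.A)
    {Bo : B} (q : Fl.obj X.A ⟶ Bo) (i : Bo ⟶ Fl.obj X.A)
    (hsplit : q ≫ i = Fl.map abar ≫ adj.counit.app (Fl.obj X.A))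
    (hqi : i ≫ q = 𝟙 Bo) :
    (adj.unit.app X.A ≫ Fr.map q) ≫ (Fr.map i ≫ X.a) = 𝟙 X.A ∧
    (Fr.map i ≫ X.a) ≫ (adj.unit.app X.A ≫ Fr.map q) = 𝟙 (Fr.obj Bo) := by
  exact transpose_comp_inverse adj X.a abar (by rw [Fr.map_comp]; exact habar) hsec q i hsplit hqi
end

section
/- Let Fl ⊣ Fr be an adjunction inducing the monad T = Fr ∘ Fl on 𝒜 and comonad S = Fl ∘ Fr on ℬ, and let (B, β) be an S-coalgebra. Then: (i) β ∘ ε_B : S B ⟶ S B is idempotent; (ii) Fr(β ∘ ε_B) : T(Fr B) ⟶ T(Fr B) splits through Fr B, namely Fr β ∘ Fr ε_B = Fr(β ∘ ε_B) and Fr ε_B ∘ Fr β = id_{Fr B} (note Fl(Fr B) = S B, so T(Fr B) = Fr(S B)); (iii) for any S-coalgebra homomorphism g : (B, β) ⟶ (D, β_D), the morphism Fr g is consistent, i.e. (β_D ∘ ε_D) ∘ Fl(Fr g) = Fl(Fr g) ∘ (β ∘ ε_B). Hence the assignment (B, β) ↦ (Fr B, β ∘ ε_B), g ↦ Fr g defines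 a functor from S-coalgebras to the category Karm(F) of projective T-algebras with consistent morphisms. -/
open CategoryTheory

universe v₁ v₂ u₁ u₂

variable {A : Type u₁} [Category.{v₁} A] {B : Type u₂} [Category.{v₂} B]

/-- Objects of the category `Karm(F)`: pairs `(X, φ)` with `φ : Fl X ⟶ Fl X` idempotent
such that `Fr φ : T X ⟶ T X` splits through `X`. -/
structure KarmObj (Fl : A ⥤ B) (Fr : B ⥤ A) where
  X : A
  φ : Fl.obj X ⟶ Fl.obj X
  idem : φ ≫ φ = φ
  splits : ∃ (p : Fr.obj (Fl.obj X) ⟶ X) (s : X ⟶ Fr.obj (Fl.obj X)),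
    p ≫ s = Fr.map φ ∧ s ≫ p = 𝟙 X

/-- The category `Karm(F)` of projective `T`-algebras with consistent morphisms. -/
instance karmCategory (Fl : A ⥤ B) (Fr : B ⥤ A) : Category (KarmObj Fl Fr) where
  Hom P Q := { f : P.X ⟶ Q.X // Fl.map f ≫ Q.φ = P.φ ≫ Fl.map f }
  id P := ⟨𝟙 P.X, by simp⟩
  comp {P Q R} f g := ⟨f.1 ≫ g.1, by
    rw [Fl.map_comp, Category.assoc, g.2, ← Category.assoc, f.2, Category.assoc]⟩
  id_comp f := Subtype.ext (Category.id_comp _)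
  comp_id f := Subtype.ext (Category.comp_id _)
  assoc f g h := Subtype.ext (Category.assoc _ _ _)

section

variable {Fl : A ⥤ B} {Fr : B ⥤ A} (adj : Fl ⊣ Fr)

/-- The structure map of a coalgebra is a section of the counit. -/
theorem coalgebra_a_comp_counit (Bc : adj.toComonad.Coalgebra) :
    (Bc.a : Bc.A ⟶ Fl.obj (Fr.obj Bc.A)) ≫ adj.counit.app Bc.A = 𝟙 Bc.A :=
  Bc.counit

theorem counit_comp_coalgebra_a_idem (Bc : adj.toComonad.Coalgebra) :
    (adj.counit.app Bc.A ≫ Bc.a) ≫ (adj.counit.app Bc.A ≫ Bc.a) =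
      adj.counit.app Bc.A ≫ Bc.a := by
  rw [Category.assoc]
  congr 1
  exact (Category.assoc _ _ _).symm.trans
    ((congrArg (· ≫ Bc.a) (coalgebra_a_comp_counit adj Bc)).trans (Category.id_comp _))

theorem map_coalgebra_a_comp_map_counit (Bc : adj.toComonad.Coalgebra) :
    Fr.map Bc.a ≫ Fr.map (adj.counit.app Bc.A) = 𝟙 (Fr.obj Bc.A) :=
  (Fr.map_comp _ _).symm.trans
    ((congrArg Fr.map (coalgebra_a_comp_counit adj Bc)).trans (Fr.map_id _))

/-- The right adjoint sends coalgebra homomorphisms to consistent morphisms. -/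
theorem map_coalgebra_hom_consistent {Bc Dc : adj.toComonad.Coalgebra} (g : Bc ⟶ Dc) :
    Fl.map (Fr.map g.f) ≫ (adj.counit.app Dc.A ≫ Dc.a) =
      (adj.counit.app Bc.A ≫ Bc.a) ≫ Fl.map (Fr.map g.f) := by
  have hg : Bc.a ≫ Fl.map (Fr.map g.f) = g.f ≫ Dc.a := g.h
  exact (adj.counit_naturality_assoc g.f Dc.a).trans
    ((congrArg (adj.counit.app Bc.A ≫ ·) hg.symm).trans (Category.assoc _ _ _).symm)

/-- The functor `(B, β) ↦ (Fr B, β ∘ ε_B)`, `g ↦ Fr g` from coalgebras to `Karm(F)`. -/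
def coalgebraToKarm : adj.toComonad.Coalgebra ⥤ KarmObj Fl Fr where
  obj Bc :=
    { X := Fr.obj Bc.A
      φ := adj.counit.app Bc.A ≫ Bc.a
      idem := counit_comp_coalgebra_a_idem adj Bc
      splits := ⟨Fr.map (adj.counit.app Bc.A), Fr.map Bc.a, (Fr.map_comp _ _).symm,
        map_coalgebra_a_comp_map_counit adj Bc⟩ }
  map g := ⟨Fr.map g.f, map_coalgebra_hom_consistent adj g⟩
  map_id _ := Subtype.ext (Fr.map_id _)
  map_comp _ _ := Subtype.ext (Fr.map_comp _ _)

end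

/-- For an adjunction `Fl ⊣ Fr` inducing the monad `T = Fr ∘ Fl` and the
comonad `S = Fl ∘ Fr`, and any `S`-coalgebra `(B, β)`:
(i) `β ∘ ε_B` is idempotent on `S B`;
(ii) `Fr(β ∘ ε_B)` splits through `Fr B`, via `Fr β ∘ Fr ε_B = Fr(β ∘ ε_B)` and
`Fr ε_B ∘ Fr β = id`;
(iii) for any coalgebra homomorphism `g`, `Fr g` is consistent.
Hence `(B, β) ↦ (Fr B, β ∘ ε_B)`, `g ↦ Fr g` defines a functor from `S`-coalgebras
to `Karm(F)`. -/
theorem coalgebras_to_karm_functor {Fl : A ⥤ B} {Fr : B ⥤ A} (adj : Fl ⊣ Fr) :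
    (∀ Bc : (Adjunction.toComonad adj).Coalgebra,
        (adj.counit.app Bc.A ≫ Bc.a) ≫ (adj.counit.app Bc.A ≫ Bc.a) =
          adj.counit.app Bc.A ≫ Bc.a) ∧
    (∀ Bc : (Adjunction.toComonad adj).Coalgebra,
        Fr.map (adj.counit.app Bc.A) ≫ Fr.map Bc.a =
            Fr.map (adj.counit.app Bc.A ≫ Bc.a) ∧
          Fr.map Bc.a ≫ Fr.map (adj.counit.app Bc.A) = 𝟙 (Fr.obj Bc.A)) ∧
    (∀ (Bc Dc : (Adjunction.toComonad adj).Coalgebra) (g : Bc ⟶ Dc),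
        Fl.map (Fr.map g.f) ≫ (adj.counit.app Dc.A ≫ Dc.a) =
          (adj.counit.app Bc.A ≫ Bc.a) ≫ Fl.map (Fr.map g.f)) ∧
    (∃ R : (Adjunction.toComonad adj).Coalgebra ⥤ KarmObj Fl Fr,
        (∀ Bc, (R.obj Bc).X = Fr.obj Bc.A ∧
          HEq (R.obj Bc).φ (adj.counit.app Bc.A ≫ Bc.a)) ∧
        (∀ (Bc Dc : (Adjunction.toComonad adj).Coalgebra) (g : Bc ⟶ Dc),
          HEq (R.map g).1 (Fr.map g.f))) := by
  exact ⟨counit_comp_coalgebra_a_idem adj,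
    fun Bc => ⟨(Fr.map_comp _ _).symm, map_coalgebra_a_comp_map_counit adj Bc⟩,
    fun _ _ g => map_coalgebra_hom_consistent adj g,
    coalgebraToKarm adj, fun _ => ⟨rfl, HEq.rfl⟩, fun _ _ _ => HEq.rfl⟩
end
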